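/- Let T = T[0]T[1]...T[n-1] be a string of length n ≥ 1 over a linearly ordered alphabet such that T[n-1] is strictly smaller than every other symbol occurring in T and occurs only at position n-1. Fix 0 ≤ i < n and let j = min{ k : i < k < n and T_k <_lex T_i } if such k exists, and j = n otherwise. Then the substring T[i..j-1] is a Lyndon word. -/

import Mathlib

/-- The suffix `T[i..n-1]` of the string of length `n` represented by `T : ℕ → α`. -/
def suffixAt {α : Type*} (T : ℕ → α) (n i : ℕ) : List α :=
  (List.range (n - i)).map (fun k => T (i + k))

/-- A Lyndon word: a nonempty string strictly lexicographically smaller than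
all of its proper nonempty suffixes. -/
def IsLyndon {α : Type*} [LinearOrder α] (w : List α) : Prop :=
  w ≠ [] ∧ ∀ i, 0 < i → i < w.length → List.Lex (· < ·) w (w.drop i)

/-!
Write `u = T[i..j-1]` and `r = T_j`, so that `T_i = u ++ r`. By the choice of `j`, `r < u ++ r`
(the empty suffix `T_n` being smaller than every other one), while `u ++ r ≤ v ++ r` for every
nonempty suffix `v` of `u`. If a proper such `v` were smaller than `u`, then either they differ at
some letter, whence `v ++ r < u ++ r`, or `u = v ++ t` with `t` again a proper nonempty suffix of
`u`. In the latter case `r < u ++ r ≤ t ++ r`, and prepending `v` gives `v ++ r < u ++ r` again.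
-/

@[simp]
theorem length_suffixAt {α : Type*} (T : ℕ → α) (n i : ℕ) : (suffixAt T n i).length = n - i := by
  simp [suffixAt]

@[simp]
theorem suffixAt_self {α : Type*} (T : ℕ → α) (n : ℕ) : suffixAt T n n = [] := by
  simp [suffixAt]

theorem drop_suffixAt {α : Type*} (T : ℕ → α) (n i m : ℕ) :
    (suffixAt T n i).drop m = suffixAt T n (i + m) := by
  apply List.ext_getElem
  · simp [Nat.sub_sub]
  · simp [suffixAt, Nat.add_assoc]

theorem lex_append_append_of_not_isPrefix {α : Type*} {r : α → α → Prop} {v w : List α}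
    (h : List.Lex r v w) (hvw : ¬ v <+: w) (x y : List α) : List.Lex r (v ++ x) (w ++ y) := by
  induction h with
  | nil => exact absurd List.nil_prefix hvw
  | rel hab => exact .rel hab
  | cons _ ih => exact .cons (ih fun hp => hvw (List.prefix_cons_inj _ |>.mpr hp))

section Lyndon

variable {α : Type*} [LinearOrder α]

theorem isLyndon_of_lt_append_of_append_le {u r : List α} (hr : r < u ++ r)
    (hle : ∀ m, 0 < m → m < u.length → u ++ r ≤ u.drop m ++ r) : IsLyndon u := by
  refine ⟨fun hu => absurd hr (by simp [hu]), fun m hm0 hm => ?_⟩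
  change u < u.drop m
  by_contra! hdrop
  have hne : u.drop m ≠ u := ne_of_apply_ne List.length (by rw [List.length_drop]; omega)
  suffices u.drop m ++ r < u ++ r from (hle m hm0 hm).not_gt this
  by_cases hprefix : u.drop m <+: u
  · rw [List.prefix_iff_eq_append, List.length_drop] at hprefix
    have hrt : r < u.drop (u.length - m) ++ r :=
      hr.trans_le (hle _ (by omega) (by omega))
    calc u.drop m ++ r < u.drop m ++ (u.drop (u.length - m) ++ r) := List.append_left_lt hrt
      _ = u ++ r := by rw [← List.append_assoc, hprefix]
  · exact lex_append_append_of_not_isPrefix (hdrop.lt_of_ne hne) hprefix r r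

theorem isLyndon_take_of_drop_lt_of_le_drop {s : List α} {l : ℕ} (hlt : s.drop l < s)
    (hle : ∀ m, 0 < m → m < l → s ≤ s.drop m) : IsLyndon (s.take l) := by
  apply isLyndon_of_lt_append_of_append_le (r := s.drop l)
  · rwa [List.take_append_drop]
  · intro m hm0 hm
    have hml : m < l := hm.trans_le (List.length_take_le l s)
    rw [← List.drop_append_of_le_length hm.le, List.take_append_drop]
    exact hle m hm0 hml

theorem nsv_factor_isLyndon_general (T : ℕ → α) (n i : ℕ) (hi : i < n) (j : ℕ)
    (hj : j = sInf {k | k = n ∨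
      (i < k ∧ k < n ∧ List.Lex (· < ·) (suffixAt T n k) (suffixAt T n i))}) :
    IsLyndon ((suffixAt T n i).take (j - i)) := by
  have hn_mem : n ∈ {k | k = n ∨
      (i < k ∧ k < n ∧ List.Lex (· < ·) (suffixAt T n k) (suffixAt T n i))} := Or.inl rfl
  have hjn : j ≤ n := hj.trans_le (Nat.sInf_le hn_mem)
  have hmem := hj ▸ Nat.sInf_mem ⟨n, hn_mem⟩
  have hij : i < j := hmem.elim (fun h => h ▸ hi) And.left
  have hlt : suffixAt T n j < suffixAt T n i := by
    rcases hmem with rfl | ⟨-, -, h⟩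
    · rw [suffixAt_self]
      exact (List.lex_nil_or_eq_nil _).resolve_right (List.ne_nil_of_length_pos (by simpa))
    · exact h
  apply isLyndon_take_of_drop_lt_of_le_drop
  · rwa [drop_suffixAt, Nat.add_sub_of_le hij.le]
  · intro m hm0 hm
    have hmj : i + m < j := by omega
    rw [drop_suffixAt, ← not_lt]
    intro h
    exact Nat.notMem_of_lt_sInf (hj ▸ hmj) (Or.inr ⟨by omega, by omega, h⟩)

end Lyndon

/-- With `j` the smallest index `k > i` such that `T_k <_lex T_i`
(or `j = n` if no such `k` exists), the factor `T[i..j-1]` is a Lyndon word. -/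
theorem nsv_factor_isLyndon {α : Type*} [LinearOrder α] (T : ℕ → α) (n : ℕ) (hn : 1 ≤ n)
    (hend : ∀ k, k < n - 1 → T (n - 1) < T k)
    (i : ℕ) (hi : i < n) (j : ℕ)
    (hj : j = sInf {k | k = n ∨
      (i < k ∧ k < n ∧ List.Lex (· < ·) (suffixAt T n k) (suffixAt T n i))}) :
    IsLyndon ((suffixAt T n i).take (j - i)) :=
  nsv_factor_isLyndon_general T n i hi j hj
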